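/- Let SU(2) be the group of 2×2 complex special unitary matrices, and define d(g,h) = arccos(Re(tr(g h⁻¹))/2) for g,h ∈ SU(2) (the distance induced by the bi-invariant Riemannian metric, equal to the geodesic distance on the unit sphere S³ under the standard identification). Then d is a restricted negative definite kernel on SU(2): for every n, all g₁,…,gₙ ∈ SU(2) and all ξ₁,…,ξₙ ∈ ℂ with ∑ᵢ ξᵢ = 0, the real part of ∑_{i,j} d(gᵢ,gⱼ) ξᵢ conj(ξⱼ) is ≤ 0. Equivalently, the Brownian kernel K(g,h) = (1/2)(d(g,e) + d(h,e) − d(g,h)) is positive definite on SU(2). -/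

import Mathlib

/-- `SU(2)` as found in Mathlib is only a submonoid of the matrices; we endow it with its
natural group structure (the inverse being the conjugate transpose). -/
noncomputable instance : Group (Matrix.specialUnitaryGroup (Fin 2) ℂ) :=
  { (inferInstance : Monoid (Matrix.specialUnitaryGroup (Fin 2) ℂ)) with
    inv := fun g => ⟨star g.1, by
      rw [Matrix.mem_specialUnitaryGroup_iff]
      refine ⟨Unitary.star_mem g.2.1, ?_⟩
      have hdet : (g.1).det = 1 := g.2.2
      simp [Matrix.star_eq_conjTranspose, Matrix.det_conjTranspose, hdet]⟩
    inv_mul_cancel := fun g => by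
      apply Subtype.ext
      exact (Unitary.mem_iff.mp g.2.1).1 }

/-- `SU(2)` is a topological group. -/
instance : IsTopologicalGroup (Matrix.specialUnitaryGroup (Fin 2) ℂ) where
  continuous_mul := by
    apply Continuous.subtype_mk
    exact (continuous_mul.comp ((continuous_subtype_val.comp continuous_fst).prodMk
      (continuous_subtype_val.comp continuous_snd)))
  continuous_inv := by
    apply Continuous.subtype_mk
    exact continuous_star.comp continuous_subtype_val

/-- The bi-invariant Riemannian distance on `SU(2)`: `d(g,h) = arccos(Re(tr(g h⁻¹))/2)`. -/
noncomputable def dSU2 (g h : Matrix.specialUnitaryGroup (Fin 2) ℂ) : ℝ :=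
  Real.arccos ((Matrix.trace ((g * h⁻¹ : Matrix.specialUnitaryGroup (Fin 2) ℂ) :
    Matrix (Fin 2) (Fin 2) ℂ)).re / 2)

/-!
Up to the additive constant `π / 2`, the angle between two vectors is minus the arcsine of the
cosine of their angle. The cosines of the angles form a Gram matrix, that of the normalized vectors,
and the Taylor coefficients of the arcsine are nonnegative; hence, by Schur's product theorem, the
arcsine preserves positive semidefiniteness entrywise. Additive constants do not contribute to forms
whose weights have total mass zero, so angles are restricted negative definite. The distance of
`SU(2)` is the angle for the Frobenius inner product. Finally, the form of the Brownian kernel comes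
from the form of the distance by adding the base point with the weight that makes the total mass
vanish.
-/

open Filter InnerProductGeometry Matrix MeasureTheory Real Topology
open scoped ComplexConjugate ComplexOrder InnerProductSpace

lemma multichoose_pos {K : Type*} [Field K] [LinearOrder K] [IsStrictOrderedRing K]
    [BinomialRing K] {a : K} (ha : 0 < a) (n : ℕ) : 0 < Ring.multichoose a n := by
  have h := Ring.factorial_nsmul_multichoose_eq_ascPochhammer a n
  rw [Polynomial.ascPochhammer_smeval_cast, Polynomial.ascPochhammer_smeval_eq_eval,
    nsmul_eq_mul] at h
  exact pos_of_mul_pos_right (h ▸ ascPochhammer_pos n a ha) (Nat.cast_nonneg _)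

lemma hasSum_one_div_one_sub_rpow (a : ℝ) {u : ℝ} (hu : |u| < 1) :
    HasSum (fun n : ℕ ↦ Ring.multichoose a n * u ^ n) (1 / (1 - u) ^ a) := by
  have h := (one_div_one_sub_rpow_hasFPowerSeriesOnBall_zero a).hasSum (y := u)
    (by simpa [Metric.mem_eball, edist_dist, Real.dist_eq] using hu)
  simpa [FormalMultilinearSeries.ofScalars, mul_comm, ← Ring.multichoose_eq] using h

lemma hasSum_one_div_sqrt_one_sub_sq {t : ℝ} (ht : |t| < 1) :
    HasSum (fun n : ℕ ↦ Ring.multichoose (1 / 2 : ℝ) n * t ^ (2 * n)) (1 / √(1 - t ^ 2)) := by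
  have h : |t ^ 2| < 1 := by rwa [abs_sq, sq_lt_one_iff_abs_lt_one]
  simpa only [pow_mul, sqrt_eq_rpow] using hasSum_one_div_one_sub_rpow (1 / 2) h

lemma integral_one_div_sqrt_one_sub_sq {x : ℝ} (hx : |x| < 1) :
    ∫ t in (0)..x, 1 / √(1 - t ^ 2) = arcsin x := by
  have abs_lt_one : ∀ t ∈ Set.uIcc 0 x, |t| < 1 := fun t ht ↦
    (by simpa using Set.abs_sub_left_of_mem_uIcc ht : |t| ≤ |x|).trans_lt hx
  have deriv : ∀ t ∈ Set.uIcc 0 x, HasDerivAt arcsin (1 / √(1 - t ^ 2)) t := fun t ht ↦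
    have := abs_lt.1 (abs_lt_one t ht)
    hasDerivAt_arcsin this.1.ne' this.2.ne
  have cont : ContinuousOn (fun t : ℝ ↦ 1 / √(1 - t ^ 2)) (Set.uIcc 0 x) := by
    refine continuousOn_const.div (by fun_prop) fun t ht ↦ ?_
    exact (sqrt_pos.2 (sub_pos.2 ((sq_lt_one_iff_abs_lt_one t).2 (abs_lt_one t ht)))).ne'
  rw [intervalIntegral.integral_eq_sub_of_hasDerivAt deriv cont.intervalIntegrable,
    arcsin_zero, sub_zero]

lemma hasSum_arcsin {x : ℝ} (hx : |x| < 1) :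
    HasSum (fun n : ℕ ↦ Ring.multichoose (1 / 2 : ℝ) n / (2 * n + 1) * x ^ (2 * n + 1))
      (arcsin x) := by
  have abs_le : ∀ t ∈ Set.uIoc 0 x, |t| ≤ |x| := fun t ht ↦ by
    simpa using Set.abs_sub_left_of_mem_uIcc (Set.uIoc_subset_uIcc ht)
  have coeff_nonneg (n : ℕ) : 0 ≤ Ring.multichoose (1 / 2 : ℝ) n :=
    (multichoose_pos one_half_pos n).le
  have h := intervalIntegral.hasSum_integral_of_dominated_convergence (μ := volume)
    (a := 0) (b := x) (F := fun n t ↦ Ring.multichoose (1 / 2 : ℝ) n * t ^ (2 * n))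
    (fun n _ ↦ Ring.multichoose (1 / 2 : ℝ) n * |x| ^ (2 * n))
    (fun n ↦ by fun_prop)
    (fun n ↦ .of_forall fun t ht ↦ by
      rw [norm_mul, norm_pow, norm_of_nonneg (coeff_nonneg n)]
      exact mul_le_mul_of_nonneg_left (pow_le_pow_left₀ (abs_nonneg t) (abs_le t ht) _)
        (coeff_nonneg n))
    (.of_forall fun _ _ ↦ (hasSum_one_div_sqrt_one_sub_sq (by rwa [abs_abs])).summable)
    intervalIntegrable_const
    (.of_forall fun t ht ↦ hasSum_one_div_sqrt_one_sub_sq ((abs_le t ht).trans_lt hx))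
  rw [integral_one_div_sqrt_one_sub_sq hx] at h
  convert! h using 2 with n
  rw [intervalIntegral.integral_const_mul, integral_pow]
  push_cast
  ring

section PosSemidef

variable {ι κ : Type*}

lemma posSemidef_of_tendsto {R : Type*} [Ring R] [PartialOrder R] [StarRing R]
    [TopologicalSpace R] [IsTopologicalSemiring R] [ContinuousStar R] [OrderClosedTopology R]
    {l : Filter κ} [l.NeBot] {A : κ → Matrix ι ι R} {B : Matrix ι ι R}
    (hA : ∀ᶠ k in l, (A k).PosSemidef)
    (h : ∀ i j, Tendsto (fun k ↦ A k i j) l (𝓝 (B i j))) : B.PosSemidef := by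
  refine ⟨Matrix.IsHermitian.ext fun i j ↦ ?_, fun c ↦ ?_⟩
  · refine tendsto_nhds_unique_of_eventuallyEq (h j i).star (h i j) ?_
    filter_upwards [hA] with k hk using hk.isHermitian.apply i j
  · refine ge_of_tendsto (f := fun k ↦ c.sum fun i a ↦ c.sum fun j b ↦ star a * A k i j * b) ?_
      (hA.mono fun k hk ↦ hk.2 c)
    exact tendsto_finsetSum _ fun i _ ↦ tendsto_finsetSum _ fun j _ ↦
      ((h i j).const_mul _).mul_const _

variable [Finite ι]

lemma posSemidef_map_pow {𝕜 : Type*} [RCLike 𝕜] {A : Matrix ι ι 𝕜} (hA : A.PosSemidef) (n : ℕ) :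
    (A.map (· ^ n)).PosSemidef := by
  induction n with
  | zero =>
    convert posSemidef_gram 𝕜 (fun _ : ι ↦ (1 : 𝕜))
    ext i j
    simp
  | succ n ih =>
    convert ih.hadamard hA
    ext i j
    simp [pow_succ]

lemma posSemidef_of_hasSum_pow {A B : Matrix ι ι ℝ} (hA : A.PosSemidef) {a : κ → ℝ}
    (ha : ∀ k, 0 ≤ a k) (e : κ → ℕ) (h : ∀ i j, HasSum (fun k ↦ a k * A i j ^ e k) (B i j)) :
    B.PosSemidef := by
  have partialSum : ∀ s : Finset κ, (∑ k ∈ s, a k • A.map (· ^ e k)).PosSemidef := fun s ↦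
    posSemidef_sum s fun k _ ↦ (posSemidef_map_pow hA (e k)).smul (ha k)
  refine posSemidef_of_tendsto (l := atTop) (.of_forall partialSum) fun i j ↦ ?_
  simpa [HasSum, Matrix.sum_apply] using h i j

lemma posSemidef_map_arcsin_of_abs_lt_one {A : Matrix ι ι ℝ} (hA : A.PosSemidef)
    (h : ∀ i j, |A i j| < 1) : (A.map arcsin).PosSemidef :=
  posSemidef_of_hasSum_pow hA
    (fun n ↦ div_nonneg (multichoose_pos one_half_pos n).le (by positivity))
    (fun n ↦ 2 * n + 1) fun i j ↦ hasSum_arcsin (h i j)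

lemma posSemidef_map_arcsin {A : Matrix ι ι ℝ} (hA : A.PosSemidef) (h : ∀ i j, |A i j| ≤ 1) :
    (A.map arcsin).PosSemidef := by
  have scaled : ∀ᶠ r : ℝ in 𝓝[<] 1, ((r • A).map arcsin).PosSemidef := by
    filter_upwards [Ioo_mem_nhdsLT zero_lt_one] with r hr
    refine posSemidef_map_arcsin_of_abs_lt_one (hA.smul hr.1.le) fun i j ↦ ?_
    rw [Matrix.smul_apply, smul_eq_mul, abs_mul, abs_of_pos hr.1]
    exact (mul_le_of_le_one_right hr.1.le (h i j)).trans_lt hr.2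
  refine posSemidef_of_tendsto scaled fun i j ↦ ?_
  have cont : Continuous fun r : ℝ ↦ arcsin (r * A i j) :=
    continuous_arcsin.comp (continuous_mul_const _)
  simpa using (cont.tendsto 1).mono_left nhdsWithin_le_nhds

end PosSemidef

section Angle

variable {ι E : Type*} [Finite ι] [NormedAddCommGroup E] [InnerProductSpace ℝ E]

lemma posSemidef_cos_angle (v : ι → E) :
    (Matrix.of fun i j ↦ cos (angle (v i) (v j))).PosSemidef := by
  suffices gram : gram ℝ (fun i ↦ NormedSpace.normalize (v i)) =
      Matrix.of fun i j ↦ cos (angle (v i) (v j)) from gram ▸ posSemidef_gram ℝ _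
  ext i j
  rw [of_apply, gram_apply, cos_angle, NormedSpace.normalize, NormedSpace.normalize,
    real_inner_smul_left, real_inner_smul_right]
  ring

lemma posSemidef_pi_div_two_sub_angle (v : ι → E) :
    (Matrix.of fun i j ↦ π / 2 - angle (v i) (v j)).PosSemidef := by
  convert! posSemidef_map_arcsin (posSemidef_cos_angle v) fun i j ↦ abs_cos_le_one _
  ext i j
  rw [map_apply, of_apply, of_apply, arcsin_eq_pi_div_two_sub_arccos,
    arccos_cos (angle_nonneg _ _) (angle_le_pi _ _)]

end Angle

section Kernel

variable {X : Type*}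

/-- Positive definiteness of a real-valued kernel, tested on finite families of points with
complex weights. Points may repeat, and symmetry is not required, whence the real part. -/
def IsPosDefKernel (K : X → X → ℝ) : Prop :=
  ∀ (n : ℕ) (x : Fin n → X) (ξ : Fin n → ℂ),
    0 ≤ (∑ i, ∑ j, (K (x i) (x j) : ℂ) * ξ i * conj (ξ j)).re

/-- Restricted (also called conditional) negative definiteness of a symmetric real-valued kernel:
the associated forms are nonpositive on complex weights of total mass zero. -/
structure IsRestrictedNegDefKernel (k : X → X → ℝ) : Prop where
  symm : ∀ x y, k x y = k y x
  re_sum_nonpos : ∀ (n : ℕ) (x : Fin n → X) (ξ : Fin n → ℂ), ∑ i, ξ i = 0 →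
    (∑ i, ∑ j, (k (x i) (x j) : ℂ) * ξ i * conj (ξ j)).re ≤ 0

/-- The Brownian kernel of `k` based at `o`: if it is positive definite and `k` vanishes on the
diagonal, it is the covariance of a Gaussian field that is zero at `o` and whose increments have
variance `k`. -/
noncomputable def brownianKernel (k : X → X → ℝ) (o x y : X) : ℝ :=
  (k x o + k y o - k x y) / 2

lemma re_sum_mul_conj {ι : Type*} [Fintype ι] (A : Matrix ι ι ℝ) (ξ : ι → ℂ) :
    (∑ i, ∑ j, (A i j : ℂ) * ξ i * conj (ξ j)).re =
      (fun i ↦ (ξ i).re) ⬝ᵥ A *ᵥ (fun i ↦ (ξ i).re) +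
        (fun i ↦ (ξ i).im) ⬝ᵥ A *ᵥ (fun i ↦ (ξ i).im) := by
  simp only [Complex.re_sum, dotProduct, mulVec, Finset.mul_sum, ← Finset.sum_add_distrib]
  refine Finset.sum_congr rfl fun i _ ↦ Finset.sum_congr rfl fun j _ ↦ ?_
  rw [Complex.mul_re, Complex.re_ofReal_mul, Complex.im_ofReal_mul, Complex.conj_re,
    Complex.conj_im]
  ring

lemma isPosDefKernel_of_posSemidef {K : X → X → ℝ}
    (hK : ∀ (n : ℕ) (x : Fin n → X), (Matrix.of fun i j ↦ K (x i) (x j)).PosSemidef) :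
    IsPosDefKernel K := fun n x ξ ↦ by
  have form_nonneg := (hK n x).dotProduct_mulVec_nonneg
  exact (re_sum_mul_conj (Matrix.of fun i j ↦ K (x i) (x j)) ξ).ge.trans' <|
    add_nonneg (form_nonneg _) (form_nonneg _)

lemma IsPosDefKernel.isRestrictedNegDefKernel_of_const_sub {k : X → X → ℝ} {a : ℝ}
    (hk : IsPosDefKernel fun x y ↦ a - k x y) (symm : ∀ x y, k x y = k y x) :
    IsRestrictedNegDefKernel k where
  symm := symm
  re_sum_nonpos n x ξ hξ := by
    have const_form : ∑ i, ∑ j, (a : ℂ) * ξ i * conj (ξ j) = 0 := by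
      simp_rw [← Finset.mul_sum, ← map_sum, hξ, map_zero, mul_zero, Finset.sum_const_zero]
    have h := hk n x ξ
    simp only [Complex.ofReal_sub, sub_mul, Finset.sum_sub_distrib, const_form, zero_sub,
      Complex.neg_re] at h
    linarith

lemma sum_brownianKernel {k : X → X → ℝ} (symm : ∀ x y, k x y = k y x) (o : X) {n : ℕ}
    (x : Fin n → X) (ξ : Fin n → ℂ) :
    2 * ∑ i, ∑ j, (brownianKernel k o (x i) (x j) : ℂ) * ξ i * conj (ξ j) =
      (∑ i, k o (x i) * ξ i) * conj (∑ j, ξ j) + (∑ i, ξ i) * (∑ j, k o (x j) * conj (ξ j)) -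
        ∑ i, ∑ j, (k (x i) (x j) : ℂ) * ξ i * conj (ξ j) := by
  rw [map_sum, Finset.sum_mul_sum, Finset.sum_mul_sum, Finset.mul_sum, ← Finset.sum_add_distrib,
    ← Finset.sum_sub_distrib]
  refine Finset.sum_congr rfl fun i _ ↦ ?_
  rw [Finset.mul_sum, ← Finset.sum_add_distrib, ← Finset.sum_sub_distrib]
  refine Finset.sum_congr rfl fun j _ ↦ ?_
  rw [brownianKernel, symm (x i) o, symm (x j) o]
  push_cast
  ring

lemma sum_cons_neg_sum_eq_sub_brownian {k : X → X → ℝ} (symm : ∀ x y, k x y = k y x) (o : X)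
    {n : ℕ} (x : Fin n → X) (ξ : Fin n → ℂ) :
    let y : Fin (n + 1) → X := Fin.cons o x
    let η : Fin (n + 1) → ℂ := Fin.cons (-∑ i, ξ i) ξ
    ∑ i, ∑ j, (k (y i) (y j) : ℂ) * η i * conj (η j) =
      k o o * Complex.normSq (∑ i, ξ i) -
        2 * ∑ i, ∑ j, (brownianKernel k o (x i) (x j) : ℂ) * ξ i * conj (ξ j) := by
  intro y η
  have row : ∑ j, (k o (x j) : ℂ) * -(∑ i, ξ i) * conj (ξ j) =
      -((∑ j, k o (x j) * conj (ξ j)) * ∑ i, ξ i) := by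
    simp_rw [mul_right_comm _ (-∑ i, ξ i), ← Finset.sum_mul, mul_neg]
  have column : ∑ i, (k (x i) o : ℂ) * ξ i * conj (-∑ j, ξ j) =
      -((∑ i, k o (x i) * ξ i) * conj (∑ j, ξ j)) := by
    simp_rw [map_neg, mul_neg, Finset.sum_neg_distrib, ← Finset.sum_mul, symm _ o]
  simp only [y, η, Fin.sum_univ_succ, Fin.cons_zero, Fin.cons_succ, Finset.sum_add_distrib, row,
    column, sum_brownianKernel symm, Complex.normSq_eq_conj_mul_self]
  rw [map_neg]
  ring

lemma IsRestrictedNegDefKernel.isPosDefKernel_brownianKernel {k : X → X → ℝ}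
    (hk : IsRestrictedNegDefKernel k) {o : X} (ho : 0 ≤ k o o) :
    IsPosDefKernel (brownianKernel k o) := fun n x ξ ↦ by
  have h := hk.re_sum_nonpos (n + 1) (Fin.cons o x) (Fin.cons (-∑ i, ξ i) ξ)
    (by simp [Fin.sum_univ_succ])
  rw [sum_cons_neg_sum_eq_sub_brownian hk.symm, ← Complex.ofReal_mul, Complex.sub_re,
    Complex.ofReal_re, ← Complex.ofReal_ofNat, Complex.re_ofReal_mul] at h
  linarith [mul_nonneg ho (Complex.normSq_nonneg (∑ i, ξ i))]

end Kernel

section Frobenius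

variable {m n : Type*} [Fintype m] [Fintype n]

/-- The entries of a complex matrix as a vector of the real Hilbert space whose norm is the
Frobenius norm. It realises the unitary group inside a sphere. -/
noncomputable def frobeniusVector (A : Matrix m n ℂ) : PiLp 2 fun _ : m × n ↦ ℂ :=
  WithLp.toLp 2 fun p ↦ A p.1 p.2

lemma inner_frobeniusVector (A B : Matrix m n ℂ) :
    ⟪frobeniusVector A, frobeniusVector B⟫_ℝ = (A * Bᴴ).trace.re := by
  simp [frobeniusVector, PiLp.inner_apply, Matrix.trace, Matrix.mul_apply, Fintype.sum_prod_type,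
    mul_comm, Complex.inner]

variable [DecidableEq n]

lemma norm_frobeniusVector_of_mem_unitaryGroup {A : Matrix n n ℂ} (hA : A ∈ unitaryGroup n ℂ) :
    ‖frobeniusVector A‖ = √(Fintype.card n) := by
  rw [norm_eq_sqrt_real_inner, inner_frobeniusVector, ← star_eq_conjTranspose,
    mem_unitaryGroup_iff.1 hA, trace_one, Complex.natCast_re]

lemma frobeniusVector_ne_zero_of_mem_unitaryGroup [Nonempty n] {A : Matrix n n ℂ}
    (hA : A ∈ unitaryGroup n ℂ) : frobeniusVector A ≠ 0 := by
  rw [← norm_pos_iff, norm_frobeniusVector_of_mem_unitaryGroup hA, sqrt_pos]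
  exact_mod_cast Fintype.card_pos

lemma angle_frobeniusVector_of_mem_unitaryGroup {A B : Matrix n n ℂ} (hA : A ∈ unitaryGroup n ℂ)
    (hB : B ∈ unitaryGroup n ℂ) :
    angle (frobeniusVector A) (frobeniusVector B) =
      arccos ((A * Bᴴ).trace.re / Fintype.card n) := by
  rw [angle, inner_frobeniusVector, norm_frobeniusVector_of_mem_unitaryGroup hA,
    norm_frobeniusVector_of_mem_unitaryGroup hB, mul_self_sqrt (Nat.cast_nonneg _)]

end Frobenius

lemma dSU2_eq_angle (g h : specialUnitaryGroup (Fin 2) ℂ) :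
    dSU2 g h = angle (frobeniusVector g.1) (frobeniusVector h.1) := by
  rw [angle_frobeniusVector_of_mem_unitaryGroup g.2.1 h.2.1, Fintype.card_fin]
  rfl

theorem SU2_dist_restricted_negdef_and_brownian_kernel_posdef_general {X E : Type*}
    [NormedAddCommGroup E] [InnerProductSpace ℝ E] (f : X → E) (hf : ∀ x, f x ≠ 0) (o : X) :
    IsRestrictedNegDefKernel (fun x y ↦ angle (f x) (f y)) ∧
      IsPosDefKernel (brownianKernel (fun x y ↦ angle (f x) (f y)) o) := by
  have posDef : IsPosDefKernel fun x y ↦ π / 2 - angle (f x) (f y) :=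
    isPosDefKernel_of_posSemidef fun n x ↦ posSemidef_pi_div_two_sub_angle fun i ↦ f (x i)
  have negDef := posDef.isRestrictedNegDefKernel_of_const_sub fun x y ↦ angle_comm (f x) (f y)
  exact ⟨negDef, negDef.isPosDefKernel_brownianKernel (angle_self (hf o)).ge⟩

open Finset in
/-- The bi-invariant distance on `SU(2)` is a restricted negative definite kernel;
equivalently, the Brownian kernel `K(g,h) = (d(g,e) + d(h,e) - d(g,h))/2` is positive
definite on `SU(2)`. -/
theorem SU2_dist_restricted_negdef_and_brownian_kernel_posdef :
    (∀ (n : ℕ) (g : Fin n → Matrix.specialUnitaryGroup (Fin 2) ℂ) (ξ : Fin n → ℂ),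
      (∑ i, ξ i) = 0 →
        (∑ i, ∑ j,
          ((dSU2 (g i) (g j) : ℝ) : ℂ) * ξ i * (starRingEnd ℂ) (ξ j)).re ≤ 0) ∧
    (∀ (n : ℕ) (g : Fin n → Matrix.specialUnitaryGroup (Fin 2) ℂ) (ξ : Fin n → ℂ),
      0 ≤ (∑ i, ∑ j,
        (((dSU2 (g i) 1 + dSU2 (g j) 1 - dSU2 (g i) (g j)) / 2 : ℝ) : ℂ)
          * ξ i * (starRingEnd ℂ) (ξ j)).re) := by
  obtain ⟨negDef, posDef⟩ := SU2_dist_restricted_negdef_and_brownian_kernel_posdef_general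
    (fun g : specialUnitaryGroup (Fin 2) ℂ ↦ frobeniusVector g.1)
    (fun g ↦ frobeniusVector_ne_zero_of_mem_unitaryGroup g.2.1) 1
  simpa only [dSU2_eq_angle] using ⟨negDef.re_sum_nonpos, posDef⟩
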